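/- arXiv:1205.5754 — 5 statements merged into one kernel-verified Lean document; each statement's English description precedes it below -/
import Mathlib

section
/- Let σ : Fin 4 → Fin 4 → Matrix (Fin 4) (Fin 4) ℂ be a constant skew-symmetric family (σ α β = −(σ β α)), let m ≠ 0 be a real number, and let ψ, ψ̄ : ℝ⁴ → (Fin 4 → ℂ) be twice continuously differentiable (ψ a column-vector field, ψ̄ a row-vector field). Define F^μ(x) := (i/(2m)) · ( ψ̄(x) ⬝ (σ μ α) ⬝ ∂_α ψ(x) + ∂_α ψ̄(x) ⬝ (σ α μ) ⬝ ψ(x) ), summed over α, where u ⬝ M ⬝ v denotes the scalar ∑_{j,k} u j * M j k * v k. Then for every x, the divergence satisfies ∑_{β ∈ Fin 4} ∂_β F^β (x) = (i/m) · ∑_{α, β ∈ Fin 4} ∂_α ψ̄(x) ⬝ (σ α β) ⬝ ∂_β ψ(x). -/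
/-- Partial derivative of a function on ℝ⁴ in the μ-th coordinate direction. -/
noncomputable def pd {E : Type*} [NormedAddCommGroup E] [NormedSpace ℝ E]
    (μ : Fin 4) (f : (Fin 4 → ℝ) → E) : (Fin 4 → ℝ) → E :=
  fun x => fderiv ℝ f x (Pi.single μ 1)

/-- The scalar `u ⬝ M ⬝ v = ∑_{j,k} u j * M j k * v k`. -/
noncomputable def triple (u : Fin 4 → ℂ) (M : Matrix (Fin 4) (Fin 4) ℂ) (v : Fin 4 → ℂ) : ℂ :=
  ∑ j : Fin 4, ∑ k : Fin 4, u j * M j k * v k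

/-!
Each product in `∂_β F^β` contributes a term with one derivative on each factor and a term with both
derivatives on the same factor. The latter pair a skew-symmetric family with a second derivative,
which is symmetric by Schwarz's theorem, so they cancel; the former give the same double sum twice,
once from each half of `F`.
-/

theorem sum_sum_eq_zero_of_skew {ι G : Type*} [Fintype ι] [AddCommGroup G] [IsAddTorsionFree G]
    {T : ι → ι → G} (hT : ∀ i j, T i j = -T j i) : ∑ i, ∑ j, T i j = 0 := by
  refine self_eq_neg.mp ?_
  calc ∑ i, ∑ j, T i j = ∑ j, ∑ i, T i j := Finset.sum_comm
    _ = ∑ j, ∑ i, -T j i := by simp only [← hT]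
    _ = -∑ i, ∑ j, T i j := by simp only [Finset.sum_neg_distrib]

section RegularizingVector

variable {𝕜 ι E V W G : Type*} [NontriviallyNormedField 𝕜] [Fintype ι]
  [NormedAddCommGroup E] [NormedSpace 𝕜 E] [NormedAddCommGroup V] [NormedSpace 𝕜 V]
  [NormedAddCommGroup W] [NormedSpace 𝕜 W] [NormedAddCommGroup G] [NormedSpace 𝕜 G]

/-- The vector `F^μ = ∑_α (B^{μα}(f, ∂_α g) + B^{αμ}(∂_α f, g))`, where `∂_α` is the derivative in
the direction `e α`. The Dirac case is `f = ψ̄`, `g = ψ`, with `B^{αβ}` a multiple of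
`(u, v) ↦ u ⬝ σ^{αβ} ⬝ v`. -/
noncomputable def regularizingVector (e : ι → E) (B : ι → ι → V →L[𝕜] W →L[𝕜] G)
    (f : E → V) (g : E → W) (μ : ι) (y : E) : G :=
  ∑ α, (B μ α (f y) (fderiv 𝕜 g y (e α)) + B α μ (fderiv 𝕜 f y (e α)) (g y))

theorem hasFDerivAt_fderiv_apply {f : E → V} {x : E} (hf : ContDiffAt 𝕜 2 f x) (v : E) :
    HasFDerivAt (fun y ↦ fderiv 𝕜 f y v) ((fderiv 𝕜 (fderiv 𝕜 f) x).flip v) x := by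
  have hf' : DifferentiableAt 𝕜 (fderiv 𝕜 f) x :=
    (hf.fderiv_right (m := 1) (by norm_num)).differentiableAt (by norm_num)
  simpa using hf'.hasFDerivAt.clm_apply (hasFDerivAt_const v x)

theorem fderiv_regularizingVector_apply (e : ι → E) (B : ι → ι → V →L[𝕜] W →L[𝕜] G)
    {f : E → V} {g : E → W} {x : E} (hf : ContDiffAt 𝕜 2 f x) (hg : ContDiffAt 𝕜 2 g x)
    (μ : ι) (v : E) :
    fderiv 𝕜 (regularizingVector e B f g μ) x v =
      ∑ α, ((B μ α (f x) (fderiv 𝕜 (fderiv 𝕜 g) x v (e α)) +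
          B μ α (fderiv 𝕜 f x v) (fderiv 𝕜 g x (e α))) +
        (B α μ (fderiv 𝕜 f x (e α)) (fderiv 𝕜 g x v) +
          B α μ (fderiv 𝕜 (fderiv 𝕜 f) x v (e α)) (g x))) := by
  have hf' := (hf.differentiableAt two_ne_zero).hasFDerivAt
  have hg' := (hg.differentiableAt two_ne_zero).hasFDerivAt
  have hF : HasFDerivAt (regularizingVector e B f g μ) _ x :=
    HasFDerivAt.fun_sum fun α _ ↦
      ((B μ α).hasFDerivAt_of_bilinear hf' (hasFDerivAt_fderiv_apply hg (e α))).add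
        ((B α μ).hasFDerivAt_of_bilinear (hasFDerivAt_fderiv_apply hf (e α)) hg')
  simp [hF.fderiv]

theorem divergence_of_dirac_regularizing_vector_general [IsRCLikeNormedField 𝕜] (e : ι → E)
    {B : ι → ι → V →L[𝕜] W →L[𝕜] G} (hB : ∀ α β, B α β = -B β α)
    {f : E → V} {g : E → W} {x : E} (hf : ContDiffAt 𝕜 2 f x) (hg : ContDiffAt 𝕜 2 g x) :
    ∑ β, fderiv 𝕜 (regularizingVector e B f g β) x (e β) =
      2 • ∑ α, ∑ β, B α β (fderiv 𝕜 f x (e α)) (fderiv 𝕜 g x (e β)) := by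
  have : CharZero 𝕜 := (IsRCLikeNormedField.rclike 𝕜).charZero_rclike
  have : IsAddTorsionFree G := .of_isTorsionFree 𝕜 G
  have hf_symm : IsSymmSndFDerivAt 𝕜 f x := hf.isSymmSndFDerivAt (by simp)
  have hg_symm : IsSymmSndFDerivAt 𝕜 g x := hg.isSymmSndFDerivAt (by simp)
  have second_deriv_g : ∑ β, ∑ α, B β α (f x) (fderiv 𝕜 (fderiv 𝕜 g) x (e β) (e α)) = 0 :=
    sum_sum_eq_zero_of_skew fun β α ↦ by simp [hB β α, hg_symm.eq (e β)]
  have second_deriv_f : ∑ β, ∑ α, B α β (fderiv 𝕜 (fderiv 𝕜 f) x (e β) (e α)) (g x) = 0 :=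
    sum_sum_eq_zero_of_skew fun β α ↦ by simp [hB α β, hf_symm.eq (e β)]
  have first_deriv_swap :
      ∑ β, ∑ α, B α β (fderiv 𝕜 f x (e α)) (fderiv 𝕜 g x (e β)) =
        ∑ α, ∑ β, B α β (fderiv 𝕜 f x (e α)) (fderiv 𝕜 g x (e β)) := Finset.sum_comm
  simp only [fderiv_regularizingVector_apply e B hf hg, Finset.sum_add_distrib]
  rw [second_deriv_g, second_deriv_f, first_deriv_swap, zero_add, add_zero, two_nsmul]

end RegularizingVector

/-- `(u, v) ↦ u ⬝ M ⬝ v` as a continuous bilinear map. It is taken over `ℝ` because the spinor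
fields are only real-differentiable. -/
noncomputable def tripleCLM (M : Matrix (Fin 4) (Fin 4) ℂ) :
    (Fin 4 → ℂ) →L[ℝ] (Fin 4 → ℂ) →L[ℝ] ℂ :=
  (Matrix.toLinearMap₂' ℂ M).toContinuousBilinearMap.bilinearRestrictScalars ℝ

theorem tripleCLM_apply (M : Matrix (Fin 4) (Fin 4) ℂ) (u v : Fin 4 → ℂ) :
    tripleCLM M u v = triple u M v := by
  simp [tripleCLM, triple, Matrix.toLinearMap₂'_apply, mul_left_comm, mul_comm]

theorem tripleCLM_neg (M : Matrix (Fin 4) (Fin 4) ℂ) : tripleCLM (-M) = -tripleCLM M := by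
  ext u v
  simp [tripleCLM]

/-- Divergence of the regularizing vector `F^μ` added to the Dirac Lagrangian:
`∂_β F^β = (i/m) ∂_α ψ̄ σ^{αβ} ∂_β ψ`. -/
theorem divergence_of_dirac_regularizing_vector
    (σ : Fin 4 → Fin 4 → Matrix (Fin 4) (Fin 4) ℂ)
    (hσ : ∀ α β, σ α β = -(σ β α))
    (m : ℝ) (hm : m ≠ 0)
    (ψ ψb : (Fin 4 → ℝ) → (Fin 4 → ℂ))
    (hψ : ContDiff ℝ 2 ψ) (hψb : ContDiff ℝ 2 ψb)
    (F : Fin 4 → (Fin 4 → ℝ) → ℂ)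
    (hF : ∀ μ x, F μ x = (Complex.I / (2 * (m : ℂ))) *
      ∑ α : Fin 4, (triple (ψb x) (σ μ α) (pd α ψ x) +
                    triple (pd α ψb x) (σ α μ) (ψ x)))
    (x : Fin 4 → ℝ) :
    ∑ β : Fin 4, pd β (F β) x =
      (Complex.I / (m : ℂ)) *
        ∑ α : Fin 4, ∑ β : Fin 4, triple (pd α ψb x) (σ α β) (pd β ψ x) := by
  let B α β := (Complex.I / (2 * (m : ℂ))) • tripleCLM (σ α β)
  have hB : ∀ α β, B α β = -B β α := fun α β ↦ by
    ext u v
    simp [B, hσ α β, tripleCLM_neg]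
  have hFB : ∀ β, F β = regularizingVector (Pi.single · 1) B ψb ψ β := fun β ↦ by
    ext y
    simp [hF, regularizingVector, B, tripleCLM_apply, pd, Finset.mul_sum, mul_add]
  calc ∑ β, pd β (F β) x
      = 2 • ∑ α, ∑ β, B α β (pd α ψb x) (pd β ψ x) := by
        simp only [hFB]
        exact divergence_of_dirac_regularizing_vector_general _ hB hψb.contDiffAt hψ.contDiffAt
    _ = Complex.I / m * ∑ α, ∑ β, triple (pd α ψb x) (σ α β) (pd β ψ x) := by
        simp only [B, smul_apply, tripleCLM_apply, smul_eq_mul,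
          ← Finset.mul_sum, nsmul_eq_mul]
        field
end

section
/- Let N : ℕ, let g be a nonzero real number, let φ : ℝ⁴ → (Fin N → ℂ) be differentiable, let a : Fin 4 → (ℝ⁴ → Matrix (Fin N) (Fin N) ℂ), and let U : ℝ⁴ → Matrix (Fin N) (Fin N) ℂ be differentiable with (U y)ᴴ * U y = 1 for all y. Define the transformed field Φ(x) := (U x).mulVec (φ x) and the transformed gauge fields A_μ(x) := U x * a_μ(x) * (U x)ᴴ − (i/g) • (∂_μ U (x) * (U x)ᴴ). Then the covariant derivative transforms covariantly: for all x and μ, ∂_μ Φ (x) − (i*g) • (A_μ(x)).mulVec (Φ x) = (U x).mulVec ( ∂_μ φ (x) − (i*g) • (a_μ(x)).mulVec (φ x) ). -/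
open Matrix

attribute [local instance] Matrix.normedAddCommGroup Matrix.normedSpace

section ProductRule

variable {𝕜 E R m n : Type*} [NontriviallyNormedField 𝕜] [NormedAddCommGroup E] [NormedSpace 𝕜 E]
  [NormedRing R] [NormedAlgebra 𝕜 R] [Fintype n] {x : E}

theorem differentiableAt_dotProduct {u w : E → n → R} (hu : DifferentiableAt 𝕜 u x)
    (hw : DifferentiableAt 𝕜 w x) : DifferentiableAt 𝕜 (fun y => u y ⬝ᵥ w y) x := by
  unfold dotProduct
  fun_prop

theorem fderiv_dotProduct_apply {u w : E → n → R} (hu : DifferentiableAt 𝕜 u x)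
    (hw : DifferentiableAt 𝕜 w x) (v : E) :
    fderiv 𝕜 (fun y => u y ⬝ᵥ w y) x v =
      fderiv 𝕜 u x v ⬝ᵥ w x + u x ⬝ᵥ fderiv 𝕜 w x v := by
  have hu_apply (j : n) : DifferentiableAt 𝕜 (fun y => u y j) x := differentiableAt_pi.1 hu j
  have hw_apply (j : n) : DifferentiableAt 𝕜 (fun y => w y j) x := differentiableAt_pi.1 hw j
  have leibniz (j : n) : fderiv 𝕜 (fun y => u y j * w y j) x v =
      fderiv 𝕜 u x v j * w x j + u x j * fderiv 𝕜 w x v j := by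
    simp [fderiv_fun_mul' (hu_apply j) (hw_apply j), fderiv_apply hu, fderiv_apply hw, add_comm]
  unfold dotProduct
  rw [fderiv_fun_sum fun j _ => (hu_apply j).fun_mul (hw_apply j)]
  simp [leibniz, Finset.sum_add_distrib]

theorem fderiv_mulVec_apply {U : E → Matrix m n R} {f : E → n → R}
    (hU : DifferentiableAt 𝕜 U x) (hf : DifferentiableAt 𝕜 f x) (v : E) :
    fderiv 𝕜 (fun y => U y *ᵥ f y) x v = fderiv 𝕜 U x v *ᵥ f x + U x *ᵥ fderiv 𝕜 f x v := by
  have hU_row (i : m) : DifferentiableAt 𝕜 (fun y => U y i) x := differentiableAt_pi.1 hU i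
  have fderiv_row (i : m) : fderiv 𝕜 (fun y => U y i) x v = fderiv 𝕜 U x v i :=
    DFunLike.congr_fun (fderiv_apply hU i) v
  ext i
  calc fderiv 𝕜 (fun y => U y *ᵥ f y) x v i
      = fderiv 𝕜 (fun y => U y i ⬝ᵥ f y) x v :=
        congr_fun (DFunLike.congr_fun
          (fderiv_pi fun i => differentiableAt_dotProduct (hU_row i) hf) v) i
    _ = (fderiv 𝕜 U x v *ᵥ f x + U x *ᵥ fderiv 𝕜 f x v) i := by
        rw [fderiv_dotProduct_apply (hU_row i) hf, fderiv_row]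
        rfl

end ProductRule

section GaugeTransformation

variable (𝕜 : Type*) {E K m n : Type*} [NontriviallyNormedField 𝕜] [NormedAddCommGroup E]
  [NormedSpace 𝕜 E] [NormedField K] [NormedAlgebra 𝕜 K] [Fintype n]

/-- The covariant derivative `∂_v f - κ a f` of the field `f` in the direction `v`, where `a` is the
`v`-component of the gauge field. The coupling `i g` of the paper is written `κ`. -/
noncomputable def covariantDeriv (κ : K) (v : E) (a : E → Matrix n n K) (f : E → n → K) (x : E) :
    n → K :=
  fderiv 𝕜 f x v - κ • a x *ᵥ f x

/-- The gauge transform `U a V + κ⁻¹ (∂_v U) V` of the `v`-component `a` of a gauge field, where `V`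
plays the role of the inverse of `U`. The derivative of `U` is taken in the entrywise topology, so
no norm on matrices has to be chosen. -/
noncomputable def gaugeTransform (κ : K) (v : E) (U : E → Matrix m n K) (V : E → Matrix n m K)
    (a : E → Matrix n n K) (x : E) : Matrix m m K :=
  U x * a x * V x + κ⁻¹ • (fderiv 𝕜 U x v * V x)

theorem gaugeTransform_I_mul [NormedAlgebra 𝕜 ℂ] (g : ℂ) (v : E) (U : E → Matrix m n ℂ)
    (V : E → Matrix n m ℂ) (a : E → Matrix n n ℂ) (x : E) :
    gaugeTransform 𝕜 (Complex.I * g) v U V a x =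
      U x * a x * V x - (Complex.I / g) • (fderiv 𝕜 U x v * V x) := by
  have coupling_inv : (Complex.I * g)⁻¹ = -(Complex.I / g) := by
    rw [mul_inv, Complex.inv_I, neg_mul, div_eq_mul_inv]
  rw [gaugeTransform, coupling_inv, neg_smul, ← sub_eq_add_neg]

variable [Fintype m] [DecidableEq n] {U : E → Matrix m n K} {V : E → Matrix n m K} {x : E}

theorem gaugeTransform_mulVec_mulVec (hVU : V x * U x = 1) (κ : K) (v : E)
    (a : E → Matrix n n K) (w : n → K) :
    gaugeTransform 𝕜 κ v U V a x *ᵥ (U x *ᵥ w) =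
      U x *ᵥ (a x *ᵥ w) + κ⁻¹ • (fderiv 𝕜 U x v *ᵥ w) := by
  have hVUw : V x *ᵥ (U x *ᵥ w) = w := by rw [mulVec_mulVec, hVU, one_mulVec]
  simp only [gaugeTransform, add_mulVec, smul_mulVec, ← mulVec_mulVec, hVUw]

variable {𝕜}

theorem covariant_derivative_transforms_covariantly_general {κ : K} (hκ : κ ≠ 0)
    {f : E → n → K} (hf : DifferentiableAt 𝕜 f x) (hU : DifferentiableAt 𝕜 U x)
    (hVU : V x * U x = 1) (a : E → Matrix n n K) (v : E) :
    covariantDeriv 𝕜 κ v (gaugeTransform 𝕜 κ v U V a) (fun y => U y *ᵥ f y) x =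
      U x *ᵥ covariantDeriv 𝕜 κ v a f x := by
  unfold covariantDeriv
  rw [fderiv_mulVec_apply hU hf, gaugeTransform_mulVec_mulVec 𝕜 hVU, smul_add,
    smul_inv_smul₀ hκ, mulVec_sub, mulVec_smul]
  abel

end GaugeTransformation

/-- Under the local U(N) gauge transformation `Φ = U φ`,
`A_μ = U a_μ U† − (i/g)(∂_μ U) U†`, the covariant derivative transforms
covariantly (the "minimum coupling rule"). -/
theorem covariant_derivative_transforms_covariantly
    (N : ℕ) (g : ℝ) (hg : g ≠ 0)
    (φ : (Fin 4 → ℝ) → (Fin N → ℂ)) (hφ : Differentiable ℝ φ)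
    (a : Fin 4 → (Fin 4 → ℝ) → Matrix (Fin N) (Fin N) ℂ)
    (U : (Fin 4 → ℝ) → Matrix (Fin N) (Fin N) ℂ)
    (hU : Differentiable ℝ U)
    (hunit : ∀ y, (U y)ᴴ * U y = 1)
    (Φ : (Fin 4 → ℝ) → (Fin N → ℂ))
    (hΦ : ∀ x, Φ x = (U x).mulVec (φ x))
    (A : Fin 4 → (Fin 4 → ℝ) → Matrix (Fin N) (Fin N) ℂ)
    (hA : ∀ μ x, A μ x = U x * a μ x * (U x)ᴴ -
            (Complex.I / (g : ℂ)) • (pd μ U x * (U x)ᴴ))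
    (x : Fin 4 → ℝ) (μ : Fin 4) :
    pd μ Φ x - (Complex.I * (g : ℂ)) • (A μ x).mulVec (Φ x) =
      (U x).mulVec (pd μ φ x - (Complex.I * (g : ℂ)) • (a μ x).mulVec (φ x)) := by
  obtain rfl : Φ = fun y => U y *ᵥ φ y := funext hΦ
  have gauge_rule : A μ x =
      gaugeTransform ℝ (Complex.I * g) (Pi.single μ 1) U (fun y => (U y)ᴴ) (a μ) x := by
    rw [hA, gaugeTransform_I_mul]
    -- The norm topology used by `pd` unfolds to the entrywise topology of `gaugeTransform`.
    rfl
  rw [gauge_rule]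
  exact covariant_derivative_transforms_covariantly_general (by simp [hg]) (hφ x) (hU x)
    (hunit x) (a μ) (Pi.single μ 1)
end

section
/- Let η : Fin 4 → Fin 4 → ℝ be the Minkowski metric (η μ ν = 0 for μ ≠ ν, η 0 0 = 1, η k k = −1 for k = 1,2,3), let γ : Fin 4 → Matrix (Fin 4) (Fin 4) ℂ satisfy the Clifford relations γ μ * γ ν + γ ν * γ μ = (2 * η μ ν : ℂ) • 1 for all μ, ν, define σ μ ν := (Complex.I/2) • (γ μ * γ ν − γ ν * γ μ), the lowered version σ' μ ν := (η μ μ * η ν ν : ℂ) • σ μ ν, and τ μ ν := (1/3 : ℂ) • ((2 * Complex.I * η μ ν : ℂ) • 1 − σ' μ ν). Then τ is a two-sided inverse of σ in the sense that for all μ, ν ∈ Fin 4: ∑_{α ∈ Fin 4} τ μ α * σ α ν = (if μ = ν then 1 else 0 : ℂ) • 1 and ∑_{α ∈ Fin 4} σ ν α * τ α μ = (if μ = ν then 1 else 0 : ℂ) • 1. -/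
/-!
Let `P` be the matrix with entries `γ^μ γ^ν`, let `G = (η^{μν})` and let `H = (η_{μν})` be its
inverse. The contraction `η_{αβ} γ^α γ^β = n` says `P H P = n P`. The Clifford relations turn `σ`
into `i (P - G)` and `(n - 1) τ` into `i ((n - 1) H - H P H)`, and multiplying these out, every
multiple of `H P` (or `P H`) cancels because of `P H P = n P`, leaving `n - 1` times the identity.
-/

open Matrix

section Ring

variable {K R : Type*} [CommRing K] [Ring R] [Algebra K R] {c : K} {G H P : R}

theorem smul_sub_mul_sub_of_mul_mul_eq_smul (hHG : H * G = 1) (hP : P * H * P = (c + 1) • P) :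
    (c • H - H * P * H) * (P - G) = -c • (1 : R) := by
  have hHPHP : H * P * H * P = (c + 1) • (H * P) := by
    rw [mul_assoc H, mul_assoc H, hP, mul_smul_comm]
  have hHPHG : H * P * H * G = H * P := by rw [mul_assoc, hHG, mul_one]
  simp only [sub_mul, mul_sub, smul_mul_assoc, hHPHP, hHPHG, hHG]
  module

theorem sub_mul_smul_sub_of_mul_mul_eq_smul (hGH : G * H = 1) (hP : P * H * P = (c + 1) • P) :
    (P - G) * (c • H - H * P * H) = -c • (1 : R) := by
  have hPHPH : P * (H * P * H) = (c + 1) • (P * H) := by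
    rw [← mul_assoc, ← mul_assoc, hP, smul_mul_assoc]
  have hGHPH : G * (H * P * H) = P * H := by rw [mul_assoc H, ← mul_assoc, hGH, one_mul]
  simp only [sub_mul, mul_sub, mul_smul_comm, hPHPH, hGHPH, hGH]
  module

end Ring

section Clifford

variable {ι K A : Type*} [Field K] [Ring A] [Algebra K A]

/-- The Clifford relations `γ^μ γ^ν + γ^ν γ^μ = 2 η^{μν} 1` for a family `γ` in a `K`-algebra. -/
def IsCliffordFamily (η : Matrix ι ι K) (γ : ι → A) : Prop :=
  ∀ μ ν, γ μ * γ ν + γ ν * γ μ = (2 * η μ ν) • (1 : A)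

/-- The spin tensor `σ^{μν} = (i/2) [γ^μ, γ^ν]`, as a matrix with entries in the algebra of the
`γ^μ`. The scalar `i` plays the role of the imaginary unit. -/
def spinTensor (i : K) (γ : ι → A) : Matrix ι ι A :=
  of fun μ ν => (i / 2) • (γ μ * γ ν - γ ν * γ μ)

theorem IsCliffordFamily.spinTensor_eq {η : Matrix ι ι K} {γ : ι → A}
    (hγ : IsCliffordFamily η γ) (h2 : (2 : K) ≠ 0) (i : K) :
    spinTensor i γ = i • (vecMulVec γ γ - η.map (algebraMap K A)) := by
  ext μ ν
  have hswap : γ ν * γ μ = (2 * η μ ν) • 1 - γ μ * γ ν := eq_sub_of_add_eq' (hγ μ ν)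
  simp only [spinTensor, of_apply, Matrix.smul_apply, Matrix.sub_apply, vecMulVec_apply,
    map_apply, Algebra.algebraMap_eq_smul_one, hswap]
  match_scalars
  · field_simp
    ring
  · field_simp

variable [Fintype ι]

/-- The covariant tensor `T_{μν} = θ_{μα} T^{αβ} θ_{βν}` obtained from `T` by lowering both indices
with the covariant metric `θ`. -/
def lowerIndices (θ : Matrix ι ι K) (T : Matrix ι ι A) : Matrix ι ι A :=
  θ.map (algebraMap K A) * T * θ.map (algebraMap K A)

/-- The tensor `τ_{μν} = (n - 1)⁻¹ ((n - 2) i θ_{μν} 1 - σ_{μν})` in dimension `n = card ι`, with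
`θ` the covariant metric and `σ_{μν}` the lowered spin tensor. For `n = 4` this is
`3 τ_{μν} + σ_{μν} = 2 i θ_{μν} 1`. -/
def dualSpinTensor (i : K) (θ : Matrix ι ι K) (γ : ι → A) : Matrix ι ι A :=
  ((Fintype.card ι : K) - 1)⁻¹ •
    ((((Fintype.card ι : K) - 2) * i) • θ.map (algebraMap K A) - lowerIndices θ (spinTensor i γ))

theorem lowerIndices_diagonal_apply [DecidableEq ι] (d : ι → K) (T : Matrix ι ι A) (μ ν : ι) :
    lowerIndices (diagonal d) T μ ν = (d μ * d ν) • T μ ν := by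
  rw [lowerIndices, diagonal_map (map_zero _), mul_diagonal, diagonal_mul, mul_smul,
    Algebra.smul_def, Algebra.smul_def, ← Algebra.commutes, Algebra.left_comm]

theorem dualSpinTensor_diagonal_apply [DecidableEq ι] (i : K) (d : ι → K) (γ : ι → A) (μ ν : ι) :
    dualSpinTensor i (diagonal d) γ μ ν = ((Fintype.card ι : K) - 1)⁻¹ •
      ((((Fintype.card ι : K) - 2) * i * diagonal d μ ν) • 1 -
        (d μ * d ν) • spinTensor i γ μ ν) := by
  simp only [dualSpinTensor, Matrix.smul_apply, Matrix.sub_apply, lowerIndices_diagonal_apply,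
    map_apply, Algebra.algebraMap_eq_smul_one, smul_smul]

namespace IsCliffordFamily

variable [DecidableEq ι] {η θ : Matrix ι ι K} {γ : ι → A}

theorem sum_smul_mul_eq_card_smul_one (hγ : IsCliffordFamily η γ) (h2 : (2 : K) ≠ 0) (hθ : θ.IsSymm)
    (hηθ : η * θ = 1) :
    ∑ α, ∑ β, θ α β • (γ α * γ β) = (Fintype.card ι : K) • (1 : A) := by
  have hswap : ∑ α, ∑ β, θ α β • (γ β * γ α) = ∑ α, ∑ β, θ α β • (γ α * γ β) := by
    rw [Finset.sum_comm]
    simp only [hθ.apply]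
  have htrace : ∑ α, ∑ β, θ α β * η α β = Fintype.card ι := by
    rw [← trace_one, ← hηθ]
    simp only [trace, diag_apply, mul_apply, hθ.apply, mul_comm]
  refine smul_right_injective A h2 ?_
  calc (2 : K) • ∑ α, ∑ β, θ α β • (γ α * γ β)
      = ∑ α, ∑ β, θ α β • (γ α * γ β + γ β * γ α) := by
        simp only [smul_add, Finset.sum_add_distrib, hswap, two_smul]
    _ = (2 : K) • (∑ α, ∑ β, θ α β * η α β) • (1 : A) := by
        simp only [hγ _ _, Finset.sum_smul, Finset.smul_sum, smul_smul, mul_left_comm]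
    _ = (2 : K) • (Fintype.card ι : K) • (1 : A) := by rw [htrace]

theorem vecMulVec_mul_mul_vecMulVec (hγ : IsCliffordFamily η γ) (h2 : (2 : K) ≠ 0)
    (hθ : θ.IsSymm) (hηθ : η * θ = 1) :
    vecMulVec γ γ * θ.map (algebraMap K A) * vecMulVec γ γ =
      (Fintype.card ι : K) • vecMulVec γ γ := by
  have hcontract : γ ⬝ᵥ θ.map (algebraMap K A) *ᵥ γ = (Fintype.card ι : K) • (1 : A) := by
    rw [← hγ.sum_smul_mul_eq_card_smul_one h2 hθ hηθ]
    simp only [dotProduct, mulVec, map_apply, Finset.mul_sum, ← Algebra.smul_def, mul_smul_comm]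
  rw [mul_assoc, mul_vecMulVec, vecMulVec_mul_vecMulVec, hcontract, smul_assoc, one_smul,
    vecMulVec_smul]

theorem dualSpinTensor_eq (hγ : IsCliffordFamily η γ) (h2 : (2 : K) ≠ 0) (hηθ : η * θ = 1)
    (i : K) :
    dualSpinTensor i θ γ = (((Fintype.card ι : K) - 1)⁻¹ * i) •
      (((Fintype.card ι : K) - 1) • θ.map (algebraMap K A) -
        θ.map (algebraMap K A) * vecMulVec γ γ * θ.map (algebraMap K A)) := by
  have hHGH : θ.map (algebraMap K A) * η.map (algebraMap K A) * θ.map (algebraMap K A) =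
      θ.map (algebraMap K A) := by
    rw [← Matrix.map_mul, mul_eq_one_comm.mp hηθ, ← Matrix.map_mul, one_mul]
  rw [dualSpinTensor, lowerIndices, hγ.spinTensor_eq h2]
  simp only [mul_smul_comm, smul_mul_assoc, mul_sub, sub_mul, hHGH]
  module

end IsCliffordFamily

theorem tau_two_sided_inverse_of_sigma_general [DecidableEq ι] {η θ : Matrix ι ι K} {γ : ι → A}
    {i : K} (hi : i * i = -1) (h2 : (2 : K) ≠ 0) (hn : (Fintype.card ι : K) ≠ 1)
    (hθ : θ.IsSymm) (hηθ : η * θ = 1) (hγ : IsCliffordFamily η γ) :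
    dualSpinTensor i θ γ * spinTensor i γ = 1 ∧ spinTensor i γ * dualSpinTensor i θ γ = 1 := by
  have hGH : η.map (algebraMap K A) * θ.map (algebraMap K A) = 1 := by
    rw [← Matrix.map_mul, hηθ, Matrix.map_one _ (map_zero _) (map_one _)]
  have hHG : θ.map (algebraMap K A) * η.map (algebraMap K A) = 1 := by
    rw [← Matrix.map_mul, mul_eq_one_comm.mp hηθ, Matrix.map_one _ (map_zero _) (map_one _)]
  have hP : vecMulVec γ γ * θ.map (algebraMap K A) * vecMulVec γ γ =
      ((Fintype.card ι : K) - 1 + 1) • vecMulVec γ γ := by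
    rw [sub_add_cancel, hγ.vecMulVec_mul_mul_vecMulVec h2 hθ hηθ]
  have hscalar : ((Fintype.card ι : K) - 1)⁻¹ * i * i * -((Fintype.card ι : K) - 1) = 1 := by
    rw [mul_assoc _ i i, hi, mul_neg_one, neg_mul_neg, inv_mul_cancel₀ (sub_ne_zero.mpr hn)]
  rw [hγ.dualSpinTensor_eq h2 hηθ, hγ.spinTensor_eq h2]
  constructor
  · rw [smul_mul_smul_comm, smul_sub_mul_sub_of_mul_mul_eq_smul hHG hP, smul_smul, hscalar,
      one_smul]
  · rw [smul_mul_smul_comm, sub_mul_smul_sub_of_mul_mul_eq_smul hGH hP, smul_smul, mul_comm i,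
      hscalar, one_smul]

end Clifford

/-- The tensor `τ_{μν} = (1/3)(2i η_{μν} 𝟙 − σ_{μν})` is a two-sided inverse of
`σ^{μν}`: `τ_{μα} σ^{αν} = σ^{να} τ_{αμ} = δ_μ^ν 𝟙`. -/
theorem tau_two_sided_inverse_of_sigma
    (η : Fin 4 → Fin 4 → ℝ)
    (hη_off : ∀ μ ν, μ ≠ ν → η μ ν = 0)
    (hη_00 : η 0 0 = 1)
    (hη_kk : ∀ k : Fin 4, k ≠ 0 → η k k = -1)
    (γ : Fin 4 → Matrix (Fin 4) (Fin 4) ℂ)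
    (hγ : ∀ μ ν, γ μ * γ ν + γ ν * γ μ = (2 * (η μ ν : ℂ)) • 1)
    (σ : Fin 4 → Fin 4 → Matrix (Fin 4) (Fin 4) ℂ)
    (hσ : ∀ μ ν, σ μ ν = (Complex.I / 2) • (γ μ * γ ν - γ ν * γ μ))
    (σ' : Fin 4 → Fin 4 → Matrix (Fin 4) (Fin 4) ℂ)
    (hσ' : ∀ μ ν, σ' μ ν = ((η μ μ * η ν ν : ℝ) : ℂ) • σ μ ν)
    (τ : Fin 4 → Fin 4 → Matrix (Fin 4) (Fin 4) ℂ)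
    (hτ : ∀ μ ν, τ μ ν = (1/3 : ℂ) • ((2 * Complex.I * (η μ ν : ℂ)) • 1 - σ' μ ν))
    (μ ν : Fin 4) :
    (∑ α : Fin 4, τ μ α * σ α ν = (if μ = ν then (1 : ℂ) else 0) • 1) ∧
    (∑ α : Fin 4, σ ν α * τ α μ = (if μ = ν then (1 : ℂ) else 0) • 1) := by
  let d : Fin 4 → ℂ := fun k => η k k
  have hηd : ∀ α β, (η α β : ℂ) = diagonal d α β := fun α β => by
    obtain rfl | hαβ := eq_or_ne α β <;> simp [d, *]
  have hdd : diagonal d * diagonal d = 1 := by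
    rw [diagonal_mul_diagonal, diagonal_eq_one]
    ext k
    obtain rfl | hk := eq_or_ne k 0
    · simp [d, hη_00]
    · simp [d, hη_kk k hk]
  have hγd : IsCliffordFamily (diagonal d) γ := fun α β => by rw [hγ, hηd]
  have hσd : spinTensor Complex.I γ = of σ := by ext1 α β; exact (hσ α β).symm
  have hτd : dualSpinTensor Complex.I (diagonal d) γ = of τ := by
    ext1 α β
    rw [dualSpinTensor_diagonal_apply, hσd, of_apply, of_apply, hτ, hσ', hηd]
    norm_num [d]
  have hinv := tau_two_sided_inverse_of_sigma_general Complex.I_mul_I two_ne_zero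
    (by norm_num) (isSymm_diagonal d) hdd hγd
  rw [hσd, hτd] at hinv
  exact ⟨by simpa [mul_apply, one_apply] using congrFun₂ hinv.1 μ ν,
    by simpa [mul_apply, one_apply, eq_comm] using congrFun₂ hinv.2 ν μ⟩
end

section
/- Let η : Fin 4 → Fin 4 → ℝ be the Minkowski metric (η μ ν = 0 for μ ≠ ν, η 0 0 = 1, η k k = −1 for k = 1,2,3), let γ : Fin 4 → Matrix (Fin 4) (Fin 4) ℂ satisfy the Clifford relations γ μ * γ ν + γ ν * γ μ = (2 * η μ ν : ℂ) • 1 for all μ, ν, define σ μ ν := (Complex.I/2) • (γ μ * γ ν − γ ν * γ μ), σ' μ ν := (η μ μ * η ν ν : ℂ) • σ μ ν, and τ μ ν := (1/3 : ℂ) • ((2 * Complex.I * η μ ν : ℂ) • 1 − σ' μ ν). Then ∑_{α, β ∈ Fin 4} γ α * τ α β * γ β = (−(4 * Complex.I)/3) • 1, i.e. γ^α τ_{αβ} γ^β = −(4i/3) · 𝟙. -/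
/-!
For any metric in dimension `n`, the mixed relations `γ^α γ_β + γ_β γ^α = 2 δ^α_β` give the
contractions `γ^α γ_α = n = γ_α γ^α` and `γ^α γ_β γ_α = (2 - n) γ_β`. Hence
`γ^α [γ_α, γ_β] γ^β = n² - (2 - n) n = 2 n (n - 1)`, while `γ^α g_{αβ} γ^β = γ^α γ_α = n`, and
`τ_{αβ}` is a linear combination of `g_{αβ}` and `[γ_α, γ_β]`.
-/

open Finset

section Clifford

variable {ι K A : Type*} [CommRing K] [Ring A] [Algebra K A]

/-- The Clifford relations `γ^μ γ^ν + γ^ν γ^μ = 2 h^{μν}` for a family `γ` with upper indices;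
accordingly `h` is the metric with upper indices. -/
def SatisfiesClifford (h : Matrix ι ι K) (γ : ι → A) : Prop :=
  ∀ μ ν, γ μ * γ ν + γ ν * γ μ = (2 * h μ ν) • (1 : A)

variable [Fintype ι]

/-- Index lowering `γ_α = g_{αμ} γ^μ`, where `g` is the metric with lower indices. -/
def lowerIndex (g : Matrix ι ι K) (γ : ι → A) (α : ι) : A :=
  ∑ μ, g α μ • γ μ

variable {g h : Matrix ι ι K} {γ : ι → A}

theorem lowerIndex_eq_smul_of_isDiag (hg : g.IsDiag) (γ : ι → A) (α : ι) :
    lowerIndex g γ α = g α α • γ α :=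
  Fintype.sum_eq_single α fun μ hμ => by rw [hg hμ.symm, zero_smul]

theorem sum_mul_lowerIndex_comm (hg : g.IsSymm) (γ : ι → A) :
    ∑ α, γ α * lowerIndex g γ α = ∑ α, lowerIndex g γ α * γ α := by
  simp only [lowerIndex, mul_sum, sum_mul, mul_smul_comm, smul_mul_assoc]
  rw [sum_comm]
  simp only [hg.apply]

theorem sum_sum_mul_smul_one_mul (g : Matrix ι ι K) (γ : ι → A) :
    ∑ α, ∑ β, γ α * (g α β • 1) * γ β = ∑ α, γ α * lowerIndex g γ α := by
  simp only [lowerIndex, mul_sum, mul_smul_comm, smul_mul_assoc, mul_one]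

variable [DecidableEq ι]

theorem mul_self_eq_one_of_isDiag (hg : g.IsDiag) (hsq : ∀ μ, g μ μ * g μ μ = 1) :
    g * g = 1 := by
  rw [← hg.diagonal_diag, Matrix.diagonal_mul_diagonal, ← Matrix.diagonal_one]
  exact congrArg Matrix.diagonal (funext hsq)

namespace SatisfiesClifford

theorem mul_lowerIndex_add_lowerIndex_mul (hγ : SatisfiesClifford h γ) (hgh : g * h = 1)
    (α β : ι) :
    γ α * lowerIndex g γ β + lowerIndex g γ β * γ α = if β = α then 2 else 0 := by
  calc γ α * lowerIndex g γ β + lowerIndex g γ β * γ α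
      = ∑ μ, g β μ • (γ μ * γ α + γ α * γ μ) := by
        simp only [lowerIndex, mul_sum, sum_mul, mul_smul_comm, smul_mul_assoc, smul_add,
          sum_add_distrib, add_comm]
    _ = (2 * (g * h) β α) • (1 : A) := by
        simp only [hγ _ _, smul_smul, ← sum_smul, Matrix.mul_apply, mul_sum, mul_left_comm]
    _ = if β = α then 2 else 0 := by
        rw [hgh, Matrix.one_apply]
        split_ifs <;> simp [Algebra.smul_def, map_ofNat]

theorem sum_mul_lowerIndex [Invertible (2 : K)] (hγ : SatisfiesClifford h γ) (hg : g.IsSymm)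
    (hgh : g * h = 1) :
    ∑ α, γ α * lowerIndex g γ α = Fintype.card ι := by
  have twice : (2 : K) • ∑ α, γ α * lowerIndex g γ α = (2 : K) • (Fintype.card ι : A) := by
    calc (2 : K) • ∑ α, γ α * lowerIndex g γ α
        = ∑ α, (γ α * lowerIndex g γ α + lowerIndex g γ α * γ α) := by
          rw [two_smul, sum_add_distrib, ← sum_mul_lowerIndex_comm hg]
      _ = (2 : K) • (Fintype.card ι : A) := by
          simp [hγ.mul_lowerIndex_add_lowerIndex_mul hgh, Algebra.smul_def, map_ofNat,
            Nat.cast_comm]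
  exact (isUnit_of_invertible (2 : K)).smul_left_cancel.mp twice

theorem sum_mul_lowerIndex_mul_lowerIndex [Invertible (2 : K)] (hγ : SatisfiesClifford h γ)
    (hg : g.IsSymm) (hgh : g * h = 1) (β : ι) :
    ∑ α, γ α * lowerIndex g γ β * lowerIndex g γ α =
      (2 - (Fintype.card ι : A)) * lowerIndex g γ β := by
  calc ∑ α, γ α * lowerIndex g γ β * lowerIndex g γ α
      = ∑ α, ((if β = α then 2 else 0) * lowerIndex g γ α -
          lowerIndex g γ β * (γ α * lowerIndex g γ α)) := by
        refine sum_congr rfl fun α _ => ?_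
        rw [eq_sub_of_add_eq (hγ.mul_lowerIndex_add_lowerIndex_mul hgh α β), sub_mul, mul_assoc]
    _ = 2 * lowerIndex g γ β - lowerIndex g γ β * Fintype.card ι := by
        rw [sum_sub_distrib, ← mul_sum, hγ.sum_mul_lowerIndex hg hgh]
        simp only [ite_mul, zero_mul, sum_ite_eq, mem_univ, if_true]
    _ = (2 - (Fintype.card ι : A)) * lowerIndex g γ β := by
        rw [sub_mul, Nat.cast_comm]

theorem sum_sum_mul_lie_lowerIndex_mul [Invertible (2 : K)] (hγ : SatisfiesClifford h γ)
    (hg : g.IsSymm) (hgh : g * h = 1) :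
    ∑ α, ∑ β, γ α * ⁅lowerIndex g γ α, lowerIndex g γ β⁆ * γ β =
      2 * (Fintype.card ι : A) * (Fintype.card ι - 1) := by
  have sum_lowerIndex_mul : ∑ β, lowerIndex g γ β * γ β = (Fintype.card ι : A) := by
    rw [← sum_mul_lowerIndex_comm hg, hγ.sum_mul_lowerIndex hg hgh]
  calc ∑ α, ∑ β, γ α * ⁅lowerIndex g γ α, lowerIndex g γ β⁆ * γ β
      = (∑ α, γ α * lowerIndex g γ α) * ∑ β, lowerIndex g γ β * γ β -
          ∑ β, (∑ α, γ α * lowerIndex g γ β * lowerIndex g γ α) * γ β := by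
        rw [sum_mul_sum]
        simp only [Ring.lie_def, mul_sub, sub_mul, sum_sub_distrib, sum_mul, mul_assoc]
        congr 1
        exact sum_comm
    _ = Fintype.card ι * Fintype.card ι - (2 - (Fintype.card ι : A)) * Fintype.card ι := by
        simp only [hγ.sum_mul_lowerIndex_mul_lowerIndex hg hgh]
        simp only [mul_assoc, ← mul_sum, hγ.sum_mul_lowerIndex hg hgh, sum_lowerIndex_mul]
    _ = 2 * (Fintype.card ι : A) * (Fintype.card ι - 1) := by
        noncomm_ring

end SatisfiesClifford

theorem gamma_tau_gamma_double_contraction_general [Invertible (2 : K)]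
    (hγ : SatisfiesClifford h γ) (hg : g.IsSymm) (hgh : g * h = 1) (a b : K) :
    ∑ α, ∑ β, γ α * (a • g α β • (1 : A) - b • ⁅lowerIndex g γ α, lowerIndex g γ β⁆) * γ β =
      (Fintype.card ι * (a - 2 * b * (Fintype.card ι - 1)) : K) • (1 : A) := by
  calc ∑ α, ∑ β, γ α * (a • g α β • (1 : A) - b • ⁅lowerIndex g γ α, lowerIndex g γ β⁆) * γ β
      = a • ∑ α, ∑ β, γ α * (g α β • 1) * γ β -
          b • ∑ α, ∑ β, γ α * ⁅lowerIndex g γ α, lowerIndex g γ β⁆ * γ β := by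
        simp only [mul_sub, sub_mul, sum_sub_distrib, smul_sum, mul_smul_comm a,
          mul_smul_comm b, smul_mul_assoc a, smul_mul_assoc b]
    _ = a • (Fintype.card ι : A) - b • (2 * (Fintype.card ι : A) * (Fintype.card ι - 1)) := by
        rw [sum_sum_mul_smul_one_mul, hγ.sum_mul_lowerIndex hg hgh,
          hγ.sum_sum_mul_lie_lowerIndex_mul hg hgh]
    _ = (Fintype.card ι * (a - 2 * b * (Fintype.card ι - 1)) : K) • (1 : A) := by
        simp only [Algebra.smul_def, mul_one, ← map_natCast (algebraMap K A),
          ← map_ofNat (algebraMap K A) 2, ← map_one (algebraMap K A), ← map_sub, ← map_mul]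
        congr 1
        ring

end Clifford

/-- Dirac algebra identity `γ^α τ_{αβ} γ^β = −(4i/3) · 𝟙`. -/
theorem gamma_tau_gamma_double_contraction
    (η : Fin 4 → Fin 4 → ℝ)
    (hη_off : ∀ μ ν, μ ≠ ν → η μ ν = 0)
    (hη_00 : η 0 0 = 1)
    (hη_kk : ∀ k : Fin 4, k ≠ 0 → η k k = -1)
    (γ : Fin 4 → Matrix (Fin 4) (Fin 4) ℂ)
    (hγ : ∀ μ ν, γ μ * γ ν + γ ν * γ μ = (2 * (η μ ν : ℂ)) • 1)
    (σ : Fin 4 → Fin 4 → Matrix (Fin 4) (Fin 4) ℂ)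
    (hσ : ∀ μ ν, σ μ ν = (Complex.I / 2) • (γ μ * γ ν - γ ν * γ μ))
    (σ' : Fin 4 → Fin 4 → Matrix (Fin 4) (Fin 4) ℂ)
    (hσ' : ∀ μ ν, σ' μ ν = ((η μ μ * η ν ν : ℝ) : ℂ) • σ μ ν)
    (τ : Fin 4 → Fin 4 → Matrix (Fin 4) (Fin 4) ℂ)
    (hτ : ∀ μ ν, τ μ ν = (1/3 : ℂ) • ((2 * Complex.I * (η μ ν : ℂ)) • 1 - σ' μ ν)) :
    ∑ α : Fin 4, ∑ β : Fin 4, γ α * τ α β * γ β =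
      (-(4 * Complex.I)/3) • (1 : Matrix (Fin 4) (Fin 4) ℂ) := by
  let g : Matrix (Fin 4) (Fin 4) ℂ := Matrix.of fun μ ν => (η μ ν : ℂ)
  have g_isDiag : g.IsDiag := fun μ ν hμν => by simp [g, hη_off μ ν hμν]
  have g_sq (μ : Fin 4) : g μ μ * g μ μ = 1 := by
    rcases eq_or_ne μ 0 with rfl | hμ
    · simp [g, hη_00]
    · simp [g, hη_kk μ hμ]
  have τ_eq (α β : Fin 4) : τ α β = (2 * Complex.I / 3) • g α β • 1 -
      (Complex.I / 6) • ⁅lowerIndex g γ α, lowerIndex g γ β⁆ := by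
    rw [hτ, hσ', hσ, lowerIndex_eq_smul_of_isDiag g_isDiag, lowerIndex_eq_smul_of_isDiag g_isDiag,
      Ring.lie_def, smul_mul_smul_comm, smul_mul_smul_comm, Complex.ofReal_mul]
    simp only [g, Matrix.of_apply]
    module
  simp only [τ_eq]
  rw [gamma_tau_gamma_double_contraction_general hγ g_isDiag.isSymm
    (mul_self_eq_one_of_isDiag g_isDiag g_sq), Fintype.card_fin]
  congr 1
  push_cast
  ring
end

section
/- Let η : Fin 4 → Fin 4 → ℝ be the Minkowski metric (η μ ν = 0 for μ ≠ ν, η 0 0 = 1, η k k = −1 for k = 1,2,3), let γ : Fin 4 → Matrix (Fin 4) (Fin 4) ℂ satisfy the Clifford relations γ μ * γ ν + γ ν * γ μ = (2 * η μ ν : ℂ) • 1 for all μ, ν, define σ μ ν := (Complex.I/2) • (γ μ * γ ν − γ ν * γ μ), σ' μ ν := (η μ μ * η ν ν : ℂ) • σ μ ν, and τ μ ν := (1/3 : ℂ) • ((2 * Complex.I * η μ ν : ℂ) • 1 − σ' μ ν). Let m ≠ 0 be a real number. For any row vector ψ̄ : Fin 4 → ℂ and any family of row vectors w : Fin 4 →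 (Fin 4 → ℂ), define π̄^μ := (Complex.I/2) • (ψ̄ ᵥ* γ μ) − (Complex.I/m) • ∑_α (w α) ᵥ* (σ α μ). Then the relation can be inverted: for every ν ∈ Fin 4, (Complex.I*m) • ∑_α ( (π̄^α − (Complex.I/2) • (ψ̄ ᵥ* γ α)) ᵥ* (τ α ν) ) = w ν, where r ᵥ* M denotes the row-vector–matrix product. -/
open Matrix

/-!
Lowering the second index of `σ` gives the matrix `σ H = i (P - 1)` over the algebra generated by
the gamma matrices, where `H` is the covariant metric and `P` has entries `γ^μ γ_ν`. Since
`γ_α γ^α = n`, the rank-one matrix `P` satisfies `P² = n P`, so `σ H` is a root of a quadratic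
polynomial with nonzero constant term, from which its inverse is read off. For `n = 4` that inverse
is `(2 i - σ H) / 3`, which is `τ` with its first index raised.
-/

section CliffordFamily

variable {K A ι : Type*} [Field K] [Ring A] [Algebra K A]

/-- The tensor `σ^{μν} = (i/2) [γ^μ, γ^ν]` of a family `γ`, as a matrix over the algebra in which
`γ` takes its values; `i` stands for a square root of `-1` in the scalars. -/
def diracSigma (i : K) (γ : ι → A) : Matrix ι ι A :=
  of fun μ ν => (i / 2) • (γ μ * γ ν - γ ν * γ μ)

/-- The tensor `τ_{μν} = ((n - 2) i h_{μν} - σ_{μν}) / (n - 1)` in dimension `n`, where `h` is the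
covariant metric, used to lower both indices of `σ`. It is the inverse of `diracSigma`. -/
def diracTau [Fintype ι] (i : K) (h : Matrix ι ι K) (γ : ι → A) : Matrix ι ι A :=
  ((Fintype.card ι : K) - 1)⁻¹ •
    ((((Fintype.card ι : K) - 2) * i) • h.map (algebraMap K A) -
      h.map (algebraMap K A) * diracSigma i γ * h.map (algebraMap K A))

theorem smul_sub_one_mul_eq_one {n i : K} (hn : n ≠ 1) (hi : i * i = -1) {P : A}
    (hP : P * P = n • P) :
    (i • (P - 1)) * ((n - 1)⁻¹ • (((n - 2) * i) • 1 - i • (P - 1))) = 1 := by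
  have hn' : n - 1 ≠ 0 := sub_ne_zero.mpr hn
  have quadratic : (i • (P - 1)) * (((n - 2) * i) • 1 - i • (P - 1)) = (n - 1) • (1 : A) := by
    simp only [mul_sub, sub_mul, smul_mul_assoc, mul_smul_comm, smul_sub, mul_one, one_mul, hP]
    match_scalars
    · ring
    · linear_combination (1 - n) * hi
  rw [mul_smul_comm, quadratic, inv_smul_smul₀ hn']

variable {g h : Matrix ι ι K} {γ : ι → A}

theorem diracSigma_eq_smul_vecMulVec_sub [NeZero (2 : K)]
    (hγ : ∀ μ ν, γ μ * γ ν + γ ν * γ μ = (2 * g μ ν) • 1) (i : K) :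
    diracSigma i γ = i • (vecMulVec γ γ - g.map (algebraMap K A)) := by
  ext μ ν
  have hswap : γ ν * γ μ = (2 * g μ ν) • 1 - γ μ * γ ν := eq_sub_of_add_eq' (hγ μ ν)
  have h2 : (2 : K) ≠ 0 := two_ne_zero
  simp only [diracSigma, of_apply, Matrix.smul_apply, Matrix.sub_apply, vecMulVec_apply,
    map_apply, hswap, Algebra.algebraMap_eq_smul_one]
  match_scalars <;> field_simp
  ring

variable [Fintype ι] [DecidableEq ι]

theorem diracTau_diagonal_apply (i : K) (d : ι → K) (γ : ι → A) (μ ν : ι) :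
    diracTau i (diagonal d) γ μ ν = ((Fintype.card ι : K) - 1)⁻¹ •
      ((((Fintype.card ι : K) - 2) * i * diagonal d μ ν) • 1 -
        (d μ * d ν) • diracSigma i γ μ ν) := by
  have sigma_lowered : ((diagonal d).map (algebraMap K A) * diracSigma i γ *
      (diagonal d).map (algebraMap K A)) μ ν = (d μ * d ν) • diracSigma i γ μ ν := by
    rw [diagonal_map (map_zero _), mul_diagonal, diagonal_mul, ← Algebra.commutes,
      ← Algebra.smul_def, ← Algebra.smul_def, smul_smul, mul_comm]
  rw [diracTau, Matrix.smul_apply, Matrix.sub_apply, sigma_lowered, Matrix.smul_apply, map_apply,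
    Algebra.algebraMap_eq_smul_one, smul_smul]

theorem vecMul_dotProduct_self_eq_card [NeZero (2 : K)]
    (hγ : ∀ μ ν, γ μ * γ ν + γ ν * γ μ = (2 * g μ ν) • 1) (hh : h.IsSymm) (hgh : g * h = 1) :
    (γ ᵥ* h.map (algebraMap K A)) ⬝ᵥ γ = (Fintype.card ι : K) • 1 := by
  have contraction : (γ ᵥ* h.map (algebraMap K A)) ⬝ᵥ γ = ∑ μ, ∑ ν, h μ ν • (γ μ * γ ν) := by
    simp only [dotProduct, vecMul, map_apply, Finset.sum_mul]
    rw [Finset.sum_comm]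
    simp only [← Algebra.commutes, ← Algebra.smul_def, smul_mul_assoc]
  have contraction_swap : ∑ μ, ∑ ν, h μ ν • (γ μ * γ ν) = ∑ μ, ∑ ν, h μ ν • (γ ν * γ μ) := by
    rw [Finset.sum_comm]
    simp only [hh.apply]
  have trace_metric : ∑ μ, ∑ ν, h μ ν * g μ ν = Fintype.card ι := by
    rw [← trace_one (R := K), ← hgh]
    simp only [trace, diag_apply, mul_apply]
    exact Finset.sum_congr rfl fun μ _ => Finset.sum_congr rfl fun ν _ => by
      rw [hh.apply, mul_comm]
  refine smul_right_injective A (two_ne_zero (α := K)) ?_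
  calc (2 : K) • ((γ ᵥ* h.map (algebraMap K A)) ⬝ᵥ γ)
      = ∑ μ, ∑ ν, h μ ν • (γ μ * γ ν + γ ν * γ μ) := by
        rw [contraction, two_smul]
        nth_rewrite 2 [contraction_swap]
        simp only [smul_add, Finset.sum_add_distrib]
    _ = (2 : K) • (∑ μ, ∑ ν, h μ ν * g μ ν) • (1 : A) := by
        simp only [hγ, Finset.sum_smul, Finset.smul_sum, smul_smul, mul_left_comm]
    _ = (2 : K) • (Fintype.card ι : K) • (1 : A) := by rw [trace_metric]

theorem diracSigma_mul_diracTau [NeZero (2 : K)]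
    (hγ : ∀ μ ν, γ μ * γ ν + γ ν * γ μ = (2 * g μ ν) • 1) (hh : h.IsSymm) (hgh : g * h = 1)
    (hn : (Fintype.card ι : K) ≠ 1) {i : K} (hi : i * i = -1) :
    diracSigma i γ * diracTau i h γ = 1 := by
  set H := h.map (algebraMap K A) with hH
  set P := vecMulVec γ (γ ᵥ* H)
  have metric_mul : g.map (algebraMap K A) * H = 1 := by
    rw [hH, ← Matrix.map_mul, hgh, Matrix.map_one _ (map_zero _) (map_one _)]
  have sigma_lowered : diracSigma i γ * H = i • (P - 1) := by
    rw [diracSigma_eq_smul_vecMulVec_sub hγ, smul_mul_assoc, sub_mul, metric_mul, vecMulVec_mul]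
  have P_mul_P : P * P = (Fintype.card ι : K) • P := by
    rw [vecMulVec_mul_vecMulVec, vecMul_dotProduct_self_eq_card hγ hh hgh, smul_assoc, one_smul,
      vecMulVec_smul]
  rw [← smul_sub_one_mul_eq_one hn hi P_mul_P, ← sigma_lowered, diracTau]
  simp only [← hH, mul_smul_comm, mul_sub, mul_one, mul_assoc]

end CliffordFamily

theorem sum_vecMul_sum_vecMul_of_mul_eq_one {R ι s : Type*} [Semiring R] [Fintype ι]
    [DecidableEq ι] [Fintype s] [DecidableEq s] {S T : Matrix ι ι (Matrix s s R)}
    (hST : S * T = 1) (w : ι → s → R) (ν : ι) :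
    ∑ α, (∑ β, w β ᵥ* S β α) ᵥ* T α ν = w ν := by
  calc ∑ α, (∑ β, w β ᵥ* S β α) ᵥ* T α ν
      = ∑ β, w β ᵥ* (S * T) β ν := by
        simp only [sum_vecMul, vecMul_vecMul, mul_apply, vecMul_sum]
        exact Finset.sum_comm
    _ = w ν := by
        rw [hST, Finset.sum_eq_single ν (fun β _ hβ => by rw [one_apply_ne hβ, vecMul_zero])
          (by simp), one_apply_eq, vecMul_one]

theorem dirac_momenta_inversion_general {K ι s : Type*} [Field K] [NeZero (2 : K)]
    [Fintype ι] [DecidableEq ι] [Fintype s] [DecidableEq s]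
    {i : K} (hi : i * i = -1) (hn : (Fintype.card ι : K) ≠ 1)
    {g h : Matrix ι ι K} (hh : h.IsSymm) (hgh : g * h = 1)
    {γ : ι → Matrix s s K} (hγ : ∀ μ ν, γ μ * γ ν + γ ν * γ μ = (2 * g μ ν) • 1)
    {m : K} (hm : m ≠ 0) {ψb : s → K} {w πb : ι → s → K}
    (hπ : ∀ μ, πb μ = (i / 2) • (ψb ᵥ* γ μ) - (i / m) • ∑ α, w α ᵥ* diracSigma i γ α μ) (ν : ι) :
    (i * m) • ∑ α, (πb α - (i / 2) • (ψb ᵥ* γ α)) ᵥ* diracTau i h γ α ν = w ν := by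
  have hcoeff : i * m * -(i / m) = 1 := by
    field_simp
    linear_combination -hi
  simp only [hπ, sub_sub_cancel_left, ← neg_smul, smul_vecMul, ← Finset.smul_sum]
  rw [sum_vecMul_sum_vecMul_of_mul_eq_one (diracSigma_mul_diracTau hγ hh hgh hn hi), smul_smul,
    hcoeff, one_smul]

/-- Inversion of the Dirac canonical momenta: if
`π̄^μ = (i/2) ψ̄ γ^μ − (i/m) w_α σ^{αμ}`, then
`i m (π̄^α − (i/2) ψ̄ γ^α) τ_{αν} = w_ν`. -/
theorem dirac_momenta_inversion
    (η : Fin 4 → Fin 4 → ℝ)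
    (hη_off : ∀ μ ν, μ ≠ ν → η μ ν = 0)
    (hη_00 : η 0 0 = 1)
    (hη_kk : ∀ k : Fin 4, k ≠ 0 → η k k = -1)
    (γ : Fin 4 → Matrix (Fin 4) (Fin 4) ℂ)
    (hγ : ∀ μ ν, γ μ * γ ν + γ ν * γ μ = (2 * (η μ ν : ℂ)) • 1)
    (σ : Fin 4 → Fin 4 → Matrix (Fin 4) (Fin 4) ℂ)
    (hσ : ∀ μ ν, σ μ ν = (Complex.I / 2) • (γ μ * γ ν - γ ν * γ μ))
    (σ' : Fin 4 → Fin 4 → Matrix (Fin 4) (Fin 4) ℂ)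
    (hσ' : ∀ μ ν, σ' μ ν = ((η μ μ * η ν ν : ℝ) : ℂ) • σ μ ν)
    (τ : Fin 4 → Fin 4 → Matrix (Fin 4) (Fin 4) ℂ)
    (hτ : ∀ μ ν, τ μ ν = (1/3 : ℂ) • ((2 * Complex.I * (η μ ν : ℂ)) • 1 - σ' μ ν))
    (m : ℝ) (hm : m ≠ 0)
    (ψb : Fin 4 → ℂ) (w : Fin 4 → (Fin 4 → ℂ))
    (πb : Fin 4 → (Fin 4 → ℂ))
    (hπ : ∀ μ, πb μ = (Complex.I / 2) • (ψb ᵥ* γ μ) -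
            (Complex.I / (m : ℂ)) • ∑ α : Fin 4, (w α) ᵥ* (σ α μ))
    (ν : Fin 4) :
    (Complex.I * (m : ℂ)) •
      ∑ α : Fin 4, ((πb α - (Complex.I / 2) • (ψb ᵥ* γ α)) ᵥ* (τ α ν)) = w ν := by
  let d : Fin 4 → ℂ := fun μ => η μ μ
  have hη (μ ν) : (η μ ν : ℂ) = diagonal d μ ν := by
    rcases eq_or_ne μ ν with rfl | hμν
    · rw [diagonal_apply_eq]
    · rw [diagonal_apply_ne _ hμν, hη_off μ ν hμν, Complex.ofReal_zero]
  have hd : diagonal d * diagonal d = 1 := by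
    rw [diagonal_mul_diagonal, diagonal_eq_one]
    funext μ
    rcases eq_or_ne μ 0 with rfl | hμ
    · simp [d, hη_00]
    · simp [d, hη_kk μ hμ]
  have hσ_eq (μ ν) : σ μ ν = diracSigma Complex.I γ μ ν := hσ μ ν
  have hτ_eq (μ ν) : τ μ ν = diracTau Complex.I (diagonal d) γ μ ν := by
    rw [diracTau_diagonal_apply, hτ, hσ', hσ_eq, hη, Fintype.card_fin, Complex.ofReal_mul]
    norm_num [d]
  simp only [hη] at hγ
  simp only [hσ_eq] at hπ
  simp only [hτ_eq]
  exact dirac_momenta_inversion_general Complex.I_mul_I (by norm_num) (isSymm_diagonal d) hd hγ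
    (Complex.ofReal_ne_zero.mpr hm) hπ ν
end
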